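/- For the uniform scale model on ℝ₊ⁿ with P(·|θ) the law of n i.i.d. Uniform[0,θ) variables for θ > 0 and P(·|0) the law of n i.i.d. unit-scale exponentials, and prior ν(dθ) = dθ/θ on [0, ∞): there do not exist a non-empty measurable C ⊆ [0,∞) with ν(Cᶜ) > 0 and measurable A ⊆ ℝ₊ⁿ such that P(Aᶜ|θ) = 0 for all θ ∈ C and P(A|θ) = 0 for ν-almost all θ ∈ Cᶜ. -/

import Mathlib

open MeasureTheory ProbabilityTheory

open scoped ENNReal

/-- If each `ν i` dominates a fixed nonzero multiple of `μ i`, then the product of the `μ i` is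
absolutely continuous with respect to the product of the `ν i`. -/
theorem pi_absolutelyContinuous_of_smul_le {ι : Type*} [Fintype ι] {α : ι → Type*}
    [∀ i, MeasurableSpace (α i)] {μ ν : ∀ i, Measure (α i)} [∀ i, SigmaFinite (μ i)]
    {c : ℝ≥0∞} (hc : c ≠ 0) (h : ∀ i, c • μ i ≤ ν i) :
    Measure.pi μ ≪ Measure.pi ν := by
  have hle : c ^ Fintype.card ι • (Measure.pi μ).toOuterMeasure ≤
      OuterMeasure.pi fun i => (ν i).toOuterMeasure := by
    refine OuterMeasure.le_pi.2 fun s _ => ?_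
    calc c ^ Fintype.card ι * Measure.pi μ (Set.univ.pi s)
        = ∏ i, c * μ i (s i) := by
          rw [Measure.pi_pi, Finset.prod_mul_distrib, Finset.prod_const, Finset.card_univ]
      _ ≤ ∏ i, ν i (s i) := Finset.prod_le_prod' fun i _ => h i (s i)
  intro s hs
  have h0 : c ^ Fintype.card ι * Measure.pi μ s = 0 := by
    refine le_antisymm ?_ zero_le
    rw [← hs]
    refine (hle s).trans ?_
    rw [Measure.pi]
    exact le_toMeasure_apply _ _ s
  exact (mul_eq_zero.1 h0).resolve_left (pow_ne_zero _ hc)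

theorem smul_volume_restrict_Ico_le_expMeasure :
    ENNReal.ofReal (Real.exp (-1)) • volume.restrict (Set.Ico (0 : ℝ) 1) ≤ expMeasure 1 := by
  rw [← withDensity_const, ← withDensity_indicator measurableSet_Ico]
  refine withDensity_mono (ae_of_all _ fun x => ?_)
  by_cases hx : x ∈ Set.Ico (0 : ℝ) 1
  · rw [Set.indicator_of_mem hx]
    change _ ≤ exponentialPDF 1 x
    rw [exponentialPDF_of_nonneg hx.1]
    refine ENNReal.ofReal_le_ofReal ?_
    simpa using hx.2.le
  · simp [Set.indicator_of_notMem hx]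

theorem volume_restrict_pi_Ico_absolutelyContinuous_pi {ι : Type*} [Fintype ι] {κ : Measure ℝ}
    {c : ℝ≥0∞} {t : ℝ} (hc : c ≠ 0) (h : c • volume.restrict (Set.Ico 0 t) ≤ κ) :
    (volume.restrict (Set.univ.pi fun _ : ι => Set.Ico (0 : ℝ) t)) ≪
      Measure.pi fun _ : ι => κ := by
  rw [volume_pi, Measure.restrict_pi_pi]
  exact pi_absolutelyContinuous_of_smul_le hc fun _ => h

/-- Example 2 (case 2): the uniform scale model on `ℝⁿ`, with `P(·|θ)` the law of `n` i.i.d.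
`Uniform[0,θ)` random variables for `θ > 0` and `P(·|0)` (and `θ ≤ 0`) the law of `n` i.i.d.
unit-rate exponentials, together with the prior `ν(dθ) = θ⁻¹ dθ` on `[0, ∞)`. The sets `A`
and `C` of Theorem 4 do not exist. -/
theorem stmt_16 (n : ℕ) (hn : 0 < n)
    (P : ℝ → Measure (Fin n → ℝ))
    (hPpos : ∀ θ : ℝ, 0 < θ →
      P θ = Measure.pi (fun _ : Fin n =>
        (ENNReal.ofReal θ)⁻¹ • (volume.restrict (Set.Ico 0 θ))))
    (hPzero : ∀ θ : ℝ, θ ≤ 0 →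
      P θ = Measure.pi (fun _ : Fin n => expMeasure 1))
    (ν : Measure ℝ)
    (hν : ν = (volume.restrict (Set.Ici (0 : ℝ))).withDensity
      (fun θ => ENNReal.ofReal θ⁻¹)) :
    ¬ ∃ (C : Set ℝ) (A : Set (Fin n → ℝ)),
      MeasurableSet C ∧ C.Nonempty ∧ C ⊆ Set.Ici 0 ∧ 0 < ν (Set.Ici 0 \ C) ∧
      MeasurableSet A ∧
      (∀ θ ∈ C, P θ Aᶜ = 0) ∧
      (∀ᵐ θ ∂ν, θ ∈ Set.Ici 0 \ C → P θ A = 0) := by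
  rintro ⟨C, A, -, ⟨θ₁, hθ₁⟩, -, hpos, -, hC, hA⟩
  have hac_pos : ∀ θ : ℝ, 0 < θ →
      (volume.restrict (Set.univ.pi fun _ : Fin n => Set.Ico (0 : ℝ) θ)) ≪ P θ := by
    intro θ hθ
    rw [hPpos θ hθ]
    exact volume_restrict_pi_Ico_absolutelyContinuous_pi
      (ENNReal.inv_ne_zero.2 ENNReal.ofReal_ne_top) le_rfl
  obtain ⟨t₁, ht₁, hac₁⟩ : ∃ t : ℝ, 0 < t ∧
      (volume.restrict (Set.univ.pi fun _ : Fin n => Set.Ico (0 : ℝ) t)) ≪ P θ₁ := by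
    rcases lt_or_ge 0 θ₁ with h | h
    · exact ⟨θ₁, h, hac_pos θ₁ h⟩
    · refine ⟨1, one_pos, ?_⟩
      rw [hPzero θ₁ h]
      exact volume_restrict_pi_Ico_absolutelyContinuous_pi
        (by simpa using Real.exp_pos (-1)) smul_volume_restrict_Ico_le_expMeasure
  obtain ⟨θ₂, hθ₂, hAθ₂⟩ : ∃ θ : ℝ, 0 < θ ∧ P θ A = 0 := by
    by_contra! hne
    refine hpos.ne' (measure_mono_null ?_ (measure_union_null (ae_iff.1 hA)
      (show ν {0} = 0 from ?_)))
    · intro θ hθ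
      rcases (show 0 ≤ θ from hθ.1).eq_or_lt with h | h
      · exact Or.inr h.symm
      · exact Or.inl fun hcontra => hne θ h (hcontra hθ)
    · rw [hν]
      exact withDensity_absolutelyContinuous _ _
        (Measure.absolutelyContinuous_of_le Measure.restrict_le_self (by simp))
  set B : Set (Fin n → ℝ) := Set.univ.pi fun _ => Set.Ico (0 : ℝ) (min t₁ θ₂)
  have hB : volume B = 0 := by
    have h₁ : volume.restrict B Aᶜ = 0 :=
      Measure.restrict_mono (Set.pi_mono fun _ _ => Set.Ico_subset_Ico_right (min_le_left _ _))
        le_rfl |>.absolutelyContinuous (hac₁ (hC θ₁ hθ₁))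
    have h₂ : volume.restrict B A = 0 :=
      Measure.restrict_mono (Set.pi_mono fun _ _ => Set.Ico_subset_Ico_right (min_le_right _ _))
        le_rfl |>.absolutelyContinuous (hac_pos θ₂ hθ₂ hAθ₂)
    rw [← Measure.restrict_apply_univ, ← Set.union_compl_self A]
    exact measure_union_null h₂ h₁
  rw [volume_pi_pi, Finset.prod_eq_zero_iff] at hB
  obtain ⟨_, -, hi⟩ := hB
  rw [Real.volume_Ico, sub_zero, ENNReal.ofReal_eq_zero] at hi
  exact hi.not_gt (lt_min ht₁ hθ₂)
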